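/- Let G be a finite group, n a positive integer, π : G → GL(ℂⁿ) a unitary representation, and Ω ⊆ G a sampling set of size m ≥ 1, and suppose C > 0 satisfies: for every y ∈ ℂⁿ and every coordinate j, Σ_{ω∈Ω} |(π(ω)y)_j|² ≤ C·‖y‖₂². Let s ≤ n, D_{s,n} = {x ∈ ℂⁿ : ‖x‖₂ ≤ 1, ‖x‖₀ ≤ s}, and 𝒜 = {A_x : x ∈ D_{s,n}} where A_x ∈ ℂ^{m×n} has row (1/√m)·(π(ω)*x)* for ω ∈ Ω. Then for every t > 0 there exists a finite set 𝒩 ⊆ ℂ^{m×n} with |𝒩| ≤ (1 + 2·√(s·C/m)/t)^{2s}·(e·n/s)^s such that for every A ∈ 𝒜 there is A' ∈ 𝒩 with ‖A − A'‖_{2→2} ≤ t. -/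

import Mathlib

open scoped ComplexConjugate

/-- The ℓ²-norm of a finitely supported complex vector. -/
noncomputable def l2norm {ι : Type*} [Fintype ι] (v : ι → ℂ) : ℝ :=
  Real.sqrt (∑ i, ‖v i‖ ^ 2)

/-- Number of nonzero entries of a vector. -/
noncomputable def sparsity {n : ℕ} (x : Fin n → ℂ) : ℕ :=
  (Set.toFinite (Function.support x)).toFinset.card

/-- The ℓ²→ℓ² operator norm of a complex matrix. -/
noncomputable def opNorm22 {ι κ : Type*} [Fintype ι] [Fintype κ] (A : Matrix ι κ ℂ) : ℝ :=
  sSup {r : ℝ | ∃ z : κ → ℂ, l2norm z ≤ 1 ∧ r = l2norm (A.mulVec z)}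

/-- The matrix `A_x = (1/√m) · R_Ω (π(g)* x)*_{g∈G}`, whose row indexed by `ω ∈ Ω`
is `(1/√m)` times the conjugate transpose of `π(ω)* x`. -/
noncomputable def Amat {G : Type*} [Group G] [Fintype G] {n : ℕ}
    (π : G →* Matrix.unitaryGroup (Fin n) ℂ) (Ω : Finset G) (x : Fin n → ℂ) :
    Matrix ↥Ω (Fin n) ℂ :=
  fun ω j =>
    (1 / (Real.sqrt Ω.card : ℂ)) *
      conj ((((π (ω : G) : Matrix (Fin n) (Fin n) ℂ)).conjTranspose.mulVec x) j)

open MeasureTheory Metric Module in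
theorem sep_card_bound {E : Type*} [NormedAddCommGroup E] [NormedSpace ℝ E]
    [FiniteDimensional ℝ E] (ε : ℝ) (hε : 0 < ε) (s : Finset E) (hs : ∀ c ∈ s, ‖c‖ ≤ 1)
    (h : ∀ c ∈ s, ∀ d ∈ s, c ≠ d → ε ≤ ‖c - d‖) :
    (s.card : ℝ) ≤ (1 + 2 / ε) ^ finrank ℝ E := by
  borelize E
  let μ : Measure E := Measure.addHaar
  obtain ⟨δ, hδ⟩ : ∃ δ : ℝ, δ = ε / 2 := ⟨_, rfl⟩
  obtain ⟨ρ, hρ⟩ : ∃ ρ : ℝ, ρ = 1 + ε / 2 := ⟨_, rfl⟩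
  have δpos : 0 < δ := by rw [hδ]; positivity
  have ρpos : 0 < ρ := by rw [hρ]; positivity
  set A := ⋃ c ∈ s, ball (c : E) δ with hA
  have D : Set.Pairwise (s : Set E) (Function.onFun Disjoint fun c => ball (c : E) δ) := by
    rintro c hc d hd hcd
    apply ball_disjoint_ball
    rw [dist_eq_norm]
    have := h c hc d hd hcd
    linarith
  have A_subset : A ⊆ ball (0 : E) ρ := by
    refine Set.iUnion₂_subset fun x hx => ?_
    apply ball_subset_ball'
    rw [dist_zero_right]
    have := hs x hx
    linarith
  have I :
    (s.card : ENNReal) * ENNReal.ofReal (δ ^ finrank ℝ E) * μ (ball 0 1) ≤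
      ENNReal.ofReal (ρ ^ finrank ℝ E) * μ (ball 0 1) :=
    calc
      (s.card : ENNReal) * ENNReal.ofReal (δ ^ finrank ℝ E) * μ (ball 0 1) = μ A := by
        rw [hA, measure_biUnion_finset D fun c _ => measurableSet_ball]
        simp only [μ.addHaar_ball_of_pos _ δpos]
        simp only [Finset.sum_const, nsmul_eq_mul, mul_assoc]
      _ ≤ μ (ball (0 : E) ρ) := measure_mono A_subset
      _ = ENNReal.ofReal (ρ ^ finrank ℝ E) * μ (ball 0 1) := by
        simp only [μ.addHaar_ball_of_pos _ ρpos]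
  have J : (s.card : ENNReal) * ENNReal.ofReal (δ ^ finrank ℝ E)
      ≤ ENNReal.ofReal (ρ ^ finrank ℝ E) :=
    (ENNReal.mul_le_mul_iff_left (measure_ball_pos _ _ zero_lt_one).ne' measure_ball_lt_top.ne).1 I
  have K := ENNReal.toReal_le_of_le_ofReal (pow_nonneg ρpos.le _) J
  rw [ENNReal.toReal_mul, ENNReal.toReal_natCast,
    ENNReal.toReal_ofReal (pow_nonneg δpos.le _)] at K
  have e : (1 + 2 / ε) = ρ / δ := by rw [hρ, hδ]; field_simp; ring
  rw [e, div_pow, le_div_iff₀ (pow_pos δpos _)]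
  exact K

theorem exists_net {E : Type*} [NormedAddCommGroup E] [NormedSpace ℝ E]
    [FiniteDimensional ℝ E] (ε : ℝ) (hε : 0 < ε) :
    ∃ N : Finset E, (N.card : ℝ) ≤ (1 + 2 / ε) ^ Module.finrank ℝ E ∧
      ∀ x : E, ‖x‖ ≤ 1 → ∃ c ∈ N, ‖x - c‖ ≤ ε := by
  classical
  let K : Set ℕ := {k | ∃ s : Finset E, s.card = k ∧ (∀ c ∈ s, ‖c‖ ≤ 1) ∧
    (∀ c ∈ s, ∀ d ∈ s, c ≠ d → ε ≤ ‖c - d‖)}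
  have hne : K.Nonempty := ⟨0, ∅, by simp⟩
  have hbd : BddAbove K := by
    refine ⟨⌊(1 + 2 / ε) ^ Module.finrank ℝ E⌋₊, ?_⟩
    rintro k ⟨s, rfl, h1, h2⟩
    exact Nat.le_floor (sep_card_bound ε hε s h1 h2)
  obtain ⟨N, hN, h1, h2⟩ := Nat.sSup_mem hne hbd
  refine ⟨N, sep_card_bound ε hε N h1 h2, ?_⟩
  intro x hx
  by_contra! hcon
  have hxN : x ∉ N := by
    intro hxN
    have := hcon x hxN
    simp at this
    linarith
  have : (insert x N).card ∈ K := by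
    refine ⟨insert x N, rfl, ?_, ?_⟩
    · intro c hc
      rcases Finset.mem_insert.1 hc with rfl | hc
      · exact hx
      · exact h1 c hc
    · intro c hc d hd hcd
      rcases Finset.mem_insert.1 hc with hc' | hc' <;>
        rcases Finset.mem_insert.1 hd with hd' | hd'
      · exact absurd (hc'.trans hd'.symm) hcd
      · rw [hc']; exact (hcon d hd').le
      · rw [hd', norm_sub_rev]; exact (hcon c hc').le
      · exact h2 c hc' d hd' hcd
  have := le_csSup hbd this
  rw [Finset.card_insert_of_notMem hxN] at this
  omega

theorem l2norm_sq {ι : Type*} [Fintype ι] (v : ι → ℂ) : l2norm v ^ 2 = ∑ i, ‖v i‖ ^ 2 :=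
  Real.sq_sqrt (Finset.sum_nonneg fun _ _ => by positivity)

theorem l2norm_nonneg {ι : Type*} [Fintype ι] (v : ι → ℂ) : 0 ≤ l2norm v :=
  Real.sqrt_nonneg _

theorem Amat_mulVec {G : Type*} [Group G] [Fintype G] {n : ℕ}
    (π : G →* Matrix.unitaryGroup (Fin n) ℂ) (Ω : Finset G) (x z : Fin n → ℂ) (ω : ↥Ω) :
    (Amat π Ω x).mulVec z ω = (1 / (Real.sqrt Ω.card : ℂ)) *
      ∑ k, conj (x k) * ((π (ω : G) : Matrix (Fin n) (Fin n) ℂ).mulVec z) k := by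
  simp only [Matrix.mulVec, dotProduct, Amat, Matrix.conjTranspose_apply, map_sum, map_mul,
    Finset.mul_sum, Finset.sum_mul]
  rw [Finset.sum_comm]
  refine Finset.sum_congr rfl fun k _ => Finset.sum_congr rfl fun j _ => ?_
  simp
  ring

theorem Amat_bound {G : Type*} [Group G] [Fintype G] {n s : ℕ}
    (π : G →* Matrix.unitaryGroup (Fin n) ℂ) (Ω : Finset G)
    (C : ℝ) (hCpos : 0 < C)
    (hC : ∀ (y : Fin n → ℂ) (j : Fin n),
      ∑ ω ∈ Ω, ‖((π ω : Matrix (Fin n) (Fin n) ℂ).mulVec y) j‖ ^ 2 ≤ C * (l2norm y) ^ 2)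
    (S : Finset (Fin n)) (hS : S.card = s) (x : Fin n → ℂ) (hx : ∀ k ∉ S, x k = 0)
    (z : Fin n → ℂ) (hz : l2norm z ≤ 1) :
    l2norm ((Amat π Ω x).mulVec z) ≤ Real.sqrt (s * C / Ω.card) * l2norm x := by
  refine le_of_sq_le_sq ?_ (by have := l2norm_nonneg x; positivity)
  rw [mul_pow, Real.sq_sqrt (by positivity), l2norm_sq]
  have key : ∀ ω : ↥Ω, ‖(Amat π Ω x).mulVec z ω‖ ^ 2 ≤ (1 / (Ω.card : ℝ)) * (l2norm x ^ 2 *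
      ∑ k ∈ S, ‖((π (ω : G) : Matrix (Fin n) (Fin n) ℂ).mulVec z) k‖ ^ 2) := by
    intro ω
    rw [Amat_mulVec, norm_mul, mul_pow]
    have e1 : ‖(1 / (Real.sqrt Ω.card : ℂ))‖ ^ 2 = 1 / (Ω.card : ℝ) := by
      rw [norm_div, norm_one, Complex.norm_real, div_pow, Real.norm_eq_abs, sq_abs,
        Real.sq_sqrt (by positivity), one_pow]
    rw [e1]
    refine mul_le_mul_of_nonneg_left ?_ (by positivity)
    set w := ((π (ω : G) : Matrix (Fin n) (Fin n) ℂ).mulVec z)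
    have e2 : ∑ k, conj (x k) * w k = ∑ k ∈ S, conj (x k) * w k := by
      symm
      apply Finset.sum_subset (Finset.subset_univ _)
      intro k _ hk
      simp [hx k hk]
    rw [e2]
    calc ‖∑ k ∈ S, conj (x k) * w k‖ ^ 2 ≤ (∑ k ∈ S, ‖x k‖ * ‖w k‖) ^ 2 := by
          gcongr
          refine (norm_sum_le _ _).trans (le_of_eq ?_)
          simp
      _ ≤ (∑ k ∈ S, ‖x k‖ ^ 2) * ∑ k ∈ S, ‖w k‖ ^ 2 := Finset.sum_mul_sq_le_sq_mul_sq _ _ _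
      _ ≤ _ := by
          rw [l2norm_sq]
          gcongr
          exact Finset.subset_univ _
  calc _ ≤ ∑ ω : ↥Ω, (1 / (Ω.card : ℝ)) * (l2norm x ^ 2 *
      ∑ k ∈ S, ‖((π (ω : G) : Matrix (Fin n) (Fin n) ℂ).mulVec z) k‖ ^ 2) :=
        Finset.sum_le_sum fun ω _ => key ω
    _ = (1 / (Ω.card : ℝ)) * (l2norm x ^ 2 *
      ∑ k ∈ S, ∑ ω ∈ Ω, ‖((π (ω : G) : Matrix (Fin n) (Fin n) ℂ).mulVec z) k‖ ^ 2) := by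
        rw [← Finset.mul_sum, ← Finset.mul_sum, Finset.sum_comm]
        congr 2
        refine Finset.sum_congr rfl fun k _ => ?_
        exact Finset.sum_coe_sort Ω
          (fun ω => ‖((π (ω : G) : Matrix (Fin n) (Fin n) ℂ).mulVec z) k‖ ^ 2)
    _ ≤ (1 / (Ω.card : ℝ)) * (l2norm x ^ 2 * ∑ k ∈ S, C) := by
        gcongr with k _
        refine (hC z k).trans ?_
        have := l2norm_nonneg z
        have : l2norm z ^ 2 ≤ 1 := pow_le_one₀ this hz
        nlinarith
    _ = _ := by
        rw [Finset.sum_const, hS, nsmul_eq_mul]; ring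

theorem choose_bound (n s : ℕ) (hs : 1 ≤ s) :
    (n.choose s : ℝ) ≤ (Real.exp 1 * n / s) ^ s := by
  have hs0 : (0 : ℝ) < s := by exact_mod_cast hs
  have h1 : (n.choose s : ℝ) ≤ (n : ℝ) ^ s / s.factorial := Nat.choose_le_pow_div s n
  have h2 := Real.pow_div_factorial_le_exp (x := (s : ℝ)) hs0.le s
  have h3 : Real.exp (s : ℝ) = Real.exp 1 ^ s := by rw [← Real.exp_nat_mul, mul_one]
  rw [h3] at h2
  refine h1.trans ?_
  have : (Real.exp 1 * n / s) ^ s = (n : ℝ) ^ s / (s : ℝ) ^ s * Real.exp 1 ^ s := by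
    rw [div_pow, mul_pow]; ring
  rw [this]
  calc (n : ℝ) ^ s / s.factorial = (n : ℝ) ^ s / (s : ℝ) ^ s * ((s : ℝ) ^ s / s.factorial) := by
        field_simp
    _ ≤ _ := by gcongr

theorem Amat_sub {G : Type*} [Group G] [Fintype G] {n : ℕ}
    (π : G →* Matrix.unitaryGroup (Fin n) ℂ) (Ω : Finset G) (x y : Fin n → ℂ) :
    Amat π Ω x - Amat π Ω y = Amat π Ω (x - y) := by
  ext ω j
  simp only [Amat, Matrix.sub_apply, Matrix.mulVec_sub, Pi.sub_apply, map_sub, mul_sub]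

/-- Extension by zero. -/
noncomputable def extZero {n : ℕ} (S : Finset (Fin n)) (v : EuclideanSpace ℂ ↥S) : Fin n → ℂ :=
  fun i => if h : i ∈ S then v ⟨i, h⟩ else 0

theorem l2norm_supp {n : ℕ} (S : Finset (Fin n)) (x : Fin n → ℂ) (hx : ∀ k ∉ S, x k = 0) :
    l2norm x = ‖(WithLp.toLp 2 (fun i : ↥S => x i) : EuclideanSpace ℂ ↥S)‖ := by
  rw [EuclideanSpace.norm_eq, l2norm]
  congr 1
  simp only
  rw [Finset.sum_coe_sort S (fun i => ‖x i‖ ^ 2)]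
  symm
  apply Finset.sum_subset (Finset.subset_univ _)
  intro k _ hk
  simp [hx k hk]

theorem stmt9 {G : Type*} [Group G] [Fintype G] {n m s : ℕ} (hn : 1 ≤ n)
    (π : G →* Matrix.unitaryGroup (Fin n) ℂ) (Ω : Finset G)
    (hm : Ω.card = m) (hm1 : 1 ≤ m)
    (C : ℝ) (hCpos : 0 < C)
    (hC : ∀ (y : Fin n → ℂ) (j : Fin n),
      ∑ ω ∈ Ω, ‖((π ω : Matrix (Fin n) (Fin n) ℂ).mulVec y) j‖ ^ 2 ≤ C * (l2norm y) ^ 2)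
    (hs : 1 ≤ s) (hsn : s ≤ n) (t : ℝ) (ht : 0 < t) :
    ∃ 𝒩 : Finset (Matrix ↥Ω (Fin n) ℂ),
      (𝒩.card : ℝ) ≤ (1 + 2 * Real.sqrt (s * C / m) / t) ^ (2 * s) *
          (Real.exp 1 * n / s) ^ s ∧
      ∀ x : Fin n → ℂ, l2norm x ≤ 1 → sparsity x ≤ s →
        ∃ A' ∈ 𝒩, opNorm22 (Amat π Ω x - A') ≤ t := by
  classical
  set L := Real.sqrt (s * C / m) with hL
  have hm0 : (0 : ℝ) < m := by exact_mod_cast hm1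
  have hs0 : (0 : ℝ) < s := by exact_mod_cast hs
  have hLpos : 0 < L := Real.sqrt_pos.2 (by positivity)
  have hεpos : 0 < t / L := by positivity
  have hnet : ∀ S : Finset (Fin n), ∃ N : Finset (EuclideanSpace ℂ ↥S),
      (N.card : ℝ) ≤ (1 + 2 / (t / L)) ^ Module.finrank ℝ (EuclideanSpace ℂ ↥S) ∧
      ∀ x : EuclideanSpace ℂ ↥S, ‖x‖ ≤ 1 → ∃ c ∈ N, ‖x - c‖ ≤ t / L :=
    fun S => exists_net (t / L) hεpos
  choose N hN1 hN2 using hnet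
  have hdim : ∀ S : Finset (Fin n), Module.finrank ℝ (EuclideanSpace ℂ ↥S) = 2 * S.card := by
    intro S
    rw [finrank_real_of_complex, finrank_euclideanSpace, Fintype.card_coe]
  have he : 1 + 2 / (t / L) = 1 + 2 * L / t := by field_simp
  refine ⟨(Finset.powersetCard s Finset.univ).biUnion
    fun S => (N S).image fun v => Amat π Ω (extZero S v), ?_, ?_⟩
  · have h1 : ∀ S ∈ Finset.powersetCard s (Finset.univ : Finset (Fin n)),
        ((((N S).image fun v => Amat π Ω (extZero S v)).card : ℕ) : ℝ) ≤
          (1 + 2 * L / t) ^ (2 * s) := by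
      intro S hS
      have hc := (Finset.mem_powersetCard.1 hS).2
      have := hN1 S
      rw [hdim, hc, he] at this
      refine le_trans ?_ this
      exact_mod_cast Finset.card_image_le
    have h2 := Finset.card_biUnion_le (s := Finset.powersetCard s (Finset.univ : Finset (Fin n)))
      (t := fun S => (N S).image fun v => Amat π Ω (extZero S v))
    have h3 := Finset.sum_le_sum h1
    rw [Finset.sum_const, Finset.card_powersetCard, Finset.card_fin, nsmul_eq_mul] at h3
    refine le_trans (by exact_mod_cast h2) (h3.trans ?_)
    rw [mul_comm]
    gcongr
    exact choose_bound n s hs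
  · intro x hx hxs
    obtain ⟨S, hsub, hS⟩ : ∃ S : Finset (Fin n),
        (Set.toFinite (Function.support x)).toFinset ⊆ S ∧ S.card = s :=
      Finset.exists_superset_card_eq hxs (by simpa using hsn)
    have hx0 : ∀ k ∉ S, x k = 0 := by
      intro k hk
      by_contra h
      exact hk (hsub (by simpa using h))
    have hnx := l2norm_supp S x hx0
    obtain ⟨c, hc, hd⟩ := hN2 S (WithLp.toLp 2 (fun i : ↥S => x i)) (hnx ▸ hx)
    refine ⟨Amat π Ω (extZero S c), ?_, ?_⟩
    · exact Finset.mem_biUnion.2 ⟨S, Finset.mem_powersetCard.2 ⟨Finset.subset_univ _, hS⟩,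
        Finset.mem_image_of_mem _ hc⟩
    · rw [Amat_sub]
      have hy0 : ∀ k ∉ S, (x - extZero S c) k = 0 := by
        intro k hk
        simp [extZero, hk, hx0 k hk]
      have hny := l2norm_supp S _ hy0
      have hv : (WithLp.toLp 2 (fun i : ↥S => (x - extZero S c) i) : EuclideanSpace ℂ ↥S) =
          WithLp.toLp 2 (fun i : ↥S => x i) - c := by
        ext i
        simp [extZero]
      rw [hv] at hny
      refine Real.sSup_le ?_ ht.le
      rintro r ⟨z, hz, rfl⟩
      refine (Amat_bound π Ω C hCpos hC S hS _ hy0 z hz).trans ?_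
      rw [hm, ← hL, hny]
      calc L * _ ≤ L * (t / L) := by gcongr
        _ = t := by field_simp
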